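/- Let D ⊆ ℝⁿ be a nonempty convex bounded closed set, let f : ℝⁿ → ℝ be convex, and let λ̄ ∈ (0,1). Let sequences x_i ∈ D, γ_i ∈ ℝ, β_i ∈ ℝ, λ_i ∈ (0, λ̄], and subgradients a_i of f at x_i satisfy: γ_i ≤ f(x_i) and γ_i ≤ β_i for all i; the sequence (γ_i) is nondecreasing; the sequence (β_i) is nonincreasing and β_{i+1} ≤ f(x_i) for all i; and, setting l_i = (1 − λ_i)γ_i + λ_i β_i, the inequality f(x_{i'}) + ⟨a_{i'}, x_{i''} − x_{i'}⟩ ≤ l_{i''} holds for all i' < i''. Then f(x_i) − γ_i → 0 as i → ∞. -/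

import Mathlib

open scoped InnerProductSpace

/-!
Let `m w = sup_i (f (x i) + ⟨a i, w - x i⟩)`. The subgradient inequalities give `m ≤ f` with
equality at every `x i`. In particular `m` is finite; being convex and lower semicontinuous, it is
continuous by Baire's theorem. If a subsequence of `x` converges to `p`, passing to the limit along
it in the level inequalities bounds every affine piece of `m` at `p`, hence
`m p ≤ g + lamBar * (b - g)`, where `g = lim γ` and `b = lim β`. By compactness
`limsup f (x i) ≤ g + lamBar * (b - g)`, while `b ≤ f (x i)` for every `i`. As `lamBar < 1`, this
forces `b = g`, and then `f (x i) → g`.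
-/

section LevelMethod

open Filter Set Topology

theorem convexOn_ciSup {E ι : Type*} [AddCommMonoid E] [Module ℝ E] [Nonempty ι] {s : Set E}
    {f : ι → E → ℝ} (hf : ∀ i, ConvexOn ℝ s (f i))
    (hbdd : ∀ w ∈ s, BddAbove (range fun i => f i w)) :
    ConvexOn ℝ s fun w => ⨆ i, f i w := by
  refine ⟨(hf (Classical.arbitrary ι)).1, fun v hv w hw r t hr ht hrt => ciSup_le fun i => ?_⟩
  calc f i (r • v + t • w) ≤ r • f i v + t • f i w := (hf i).2 hv hw hr ht hrt
    _ ≤ r • (⨆ j, f j v) + t • ⨆ j, f j w := by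
      gcongr
      · exact le_ciSup (hbdd v hv) i
      · exact le_ciSup (hbdd w hw) i

variable {E : Type*} [NormedAddCommGroup E] [NormedSpace ℝ E]

theorem continuous_of_convexOn_of_lowerSemicontinuous [BaireSpace E] {f : E → ℝ}
    (hconv : ConvexOn ℝ univ f) (hlsc : LowerSemicontinuous f) : Continuous f := by
  obtain ⟨N, w, hw⟩ : ∃ N : ℕ, (interior (f ⁻¹' Iic (N : ℝ))).Nonempty := by
    refine nonempty_interior_of_iUnion_of_closed (fun N => hlsc.isClosed_preimage N) ?_
    exact eq_univ_of_forall fun w => mem_iUnion.2 (exists_nat_ge (f w))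
  have hbdd : (𝓝 w).IsBoundedUnder (· ≤ ·) f :=
    ⟨N, eventually_map.2 (mem_interior_iff_mem_nhds.1 hw)⟩
  have hiff : (∃ w ∈ univ, (𝓝 w).IsBoundedUnder (· ≤ ·) f) ↔ ContinuousOn f univ :=
    (hconv.continuousOn_tfae isOpen_univ univ_nonempty).out 3 1
  exact continuousOn_univ.1 (hiff.1 ⟨w, mem_univ w, hbdd⟩)

/-- `φ` is a subgradient of `f` at `y`. Subgradients are continuous linear functionals, so that
no inner product is needed. -/
def IsSubgradientAt (f : E → ℝ) (φ : StrongDual ℝ E) (y : E) : Prop :=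
  ∀ w, φ (w - y) ≤ f w - f y

/-- The cutting-plane model of `f`: the supremum of its linearizations at the points `x i` with
slopes `a i`, a continuous stand-in for `f` at limits of the `x i`. It is a real `iSup`, hence
meaningful only when these linearizations are bounded above pointwise, as they are for
subgradients. -/
noncomputable def cuttingPlaneModel {ι : Type*} (f : E → ℝ) (x : ι → E) (a : ι → StrongDual ℝ E)
    (w : E) : ℝ :=
  ⨆ i, (f (x i) + a i (w - x i))

section CuttingPlaneModel

variable {ι : Type*} {f : E → ℝ} {x : ι → E} {a : ι → StrongDual ℝ E}

theorem bddAbove_range_linearization (ha : ∀ i, IsSubgradientAt f (a i) (x i)) (w : E) :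
    BddAbove (range fun i => f (x i) + a i (w - x i)) :=
  ⟨f w, forall_mem_range.2 fun i => by linarith [ha i w]⟩

theorem cuttingPlaneModel_apply_point (ha : ∀ i, IsSubgradientAt f (a i) (x i)) (j : ι) :
    cuttingPlaneModel f x a (x j) = f (x j) := by
  have : Nonempty ι := ⟨j⟩
  refine le_antisymm (ciSup_le fun i => by linarith [ha i (x j)]) ?_
  calc f (x j) = f (x j) + a j (x j - x j) := by simp
    _ ≤ cuttingPlaneModel f x a (x j) := le_ciSup (bddAbove_range_linearization ha (x j)) j

theorem convexOn_cuttingPlaneModel [Nonempty ι] (ha : ∀ i, IsSubgradientAt f (a i) (x i)) :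
    ConvexOn ℝ univ (cuttingPlaneModel f x a) := by
  refine convexOn_ciSup (fun i => ?_) fun w _ => bddAbove_range_linearization ha w
  refine (((a i).toLinearMap.convexOn convex_univ).add_const (f (x i) - a i (x i))).congr ?_
  intro w _
  simp only [Pi.add_apply, ContinuousLinearMap.coe_coe, map_sub]
  ring

theorem lowerSemicontinuous_cuttingPlaneModel (ha : ∀ i, IsSubgradientAt f (a i) (x i)) :
    LowerSemicontinuous (cuttingPlaneModel f x a) :=
  lowerSemicontinuous_ciSup (bddAbove_range_linearization ha) fun i =>
    Continuous.lowerSemicontinuous (by fun_prop)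

theorem continuous_cuttingPlaneModel [BaireSpace E] [Nonempty ι]
    (ha : ∀ i, IsSubgradientAt f (a i) (x i)) : Continuous (cuttingPlaneModel f x a) :=
  continuous_of_convexOn_of_lowerSemicontinuous (convexOn_cuttingPlaneModel ha)
    (lowerSemicontinuous_cuttingPlaneModel ha)

end CuttingPlaneModel

variable {f : E → ℝ} {x : ℕ → E} {a : ℕ → StrongDual ℝ E} {l : ℕ → ℝ} {L : ℝ}

theorem cuttingPlaneModel_le_of_tendsto
    (hcut : ∀ i j, i < j → f (x i) + a i (x j - x i) ≤ l j) (hl : Tendsto l atTop (𝓝 L))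
    {u : ℕ → ℕ} (hu : Tendsto u atTop atTop) {p : E} (hp : Tendsto (x ∘ u) atTop (𝓝 p)) :
    cuttingPlaneModel f x a p ≤ L := by
  refine ciSup_le fun i => le_of_tendsto_of_tendsto
    ((((a i).continuous.tendsto _).comp (hp.sub_const (x i))).const_add (f (x i)))
    (hl.comp hu) ?_
  filter_upwards [hu.eventually_gt_atTop i] with k hk using hcut i (u k) hk

theorem eventually_lt_of_linearization_le [BaireSpace E] {K : Set E} (hK : IsCompact K)
    (hx : ∀ i, x i ∈ K) (ha : ∀ i, IsSubgradientAt f (a i) (x i))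
    (hcut : ∀ i j, i < j → f (x i) + a i (x j - x i) ≤ l j) (hl : Tendsto l atTop (𝓝 L))
    {c : ℝ} (hc : L < c) : ∀ᶠ i in atTop, f (x i) < c := by
  by_contra hfreq
  obtain ⟨u, hu, hcu⟩ := extraction_of_frequently_atTop (not_eventually.1 hfreq)
  obtain ⟨p, -, v, hv, hp⟩ := hK.tendsto_subseq fun k => hx (u k)
  have hmodel_le : cuttingPlaneModel f x a p ≤ L :=
    cuttingPlaneModel_le_of_tendsto hcut hl (hu.comp hv).tendsto_atTop hp
  have hle_model : c ≤ cuttingPlaneModel f x a p := by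
    refine ge_of_tendsto' (((continuous_cuttingPlaneModel ha).tendsto p).comp hp) fun k => ?_
    simpa only [Function.comp_apply, cuttingPlaneModel_apply_point ha] using not_lt.1 (hcu (v k))
  linarith

theorem stmt_16_general [BaireSpace E] {K : Set E} (hK : IsCompact K) (hx : ∀ i, x i ∈ K)
    (ha : ∀ i, IsSubgradientAt f (a i) (x i)) {lamBar : ℝ} (hlamBar : lamBar < 1)
    {γ β lam : ℕ → ℝ} (hlam : ∀ i, lam i ≤ lamBar) (hγβ : ∀ i, γ i ≤ β i)
    (hγ : Monotone γ) (hβ : Antitone β) (hβf : ∀ i, β (i + 1) ≤ f (x i))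
    (hlevel : ∀ i j, i < j →
      f (x i) + a i (x j - x i) ≤ (1 - lam j) * γ j + lam j * β j) :
    Tendsto (fun i => f (x i) - γ i) atTop (𝓝 0) := by
  obtain ⟨g, hg⟩ : ∃ g, Tendsto γ atTop (𝓝 g) :=
    ⟨_, tendsto_atTop_ciSup hγ
      ⟨β 0, forall_mem_range.2 fun i => (hγβ i).trans (hβ i.zero_le)⟩⟩
  obtain ⟨b, hb⟩ : ∃ b, Tendsto β atTop (𝓝 b) :=
    ⟨_, tendsto_atTop_ciInf hβ
      ⟨γ 0, forall_mem_range.2 fun i => (hγ i.zero_le).trans (hγβ i)⟩⟩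
  have hgb : g ≤ b := le_of_tendsto_of_tendsto' hg hb hγβ
  have hbf (i : ℕ) : b ≤ f (x i) := (hβ.le_of_tendsto hb (i + 1)).trans (hβf i)
  have hcut : ∀ i j, i < j →
      f (x i) + a i (x j - x i) ≤ γ j + lamBar * (β j - γ j) := fun i j hij => by
    linarith [hlevel i j hij, mul_le_mul_of_nonneg_right (hlam j) (sub_nonneg.2 (hγβ j))]
  have hlt {c : ℝ} (hc : g + lamBar * (b - g) < c) : ∀ᶠ i in atTop, f (x i) < c :=
    eventually_lt_of_linearization_le hK hx ha hcut (hg.add ((hb.sub hg).const_mul lamBar)) hc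
  have hble : b ≤ g + lamBar * (b - g) := le_of_forall_gt fun c hc =>
    let ⟨i, hi⟩ := (hlt hc).exists
    (hbf i).trans_lt hi
  obtain rfl : b = g := by nlinarith
  have hfb : Tendsto (fun i => f (x i)) atTop (𝓝 b) :=
    tendsto_order.2 ⟨fun c hc => .of_forall fun i => hc.trans_le (hbf i),
      fun c hc => hlt (by simpa using hc)⟩
  simpa using hfb.sub hg

end LevelMethod

/-- Lemma 2.3.8: in the level method, `f(x_i) − γ_i → 0`. -/
theorem stmt_16 {n : ℕ}
    (D : Set (EuclideanSpace ℝ (Fin n))) (hDne : D.Nonempty)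
    (hDconv : Convex ℝ D) (hDbd : Bornology.IsBounded D) (hDcl : IsClosed D)
    (f : EuclideanSpace ℝ (Fin n) → ℝ) (hf : ConvexOn ℝ Set.univ f)
    (lamBar : ℝ) (hlb : lamBar ∈ Set.Ioo (0:ℝ) 1)
    (x : ℕ → EuclideanSpace ℝ (Fin n)) (hx : ∀ i, x i ∈ D)
    (γ β lam : ℕ → ℝ)
    (hlam : ∀ i, lam i ∈ Set.Ioc 0 lamBar)
    (a : ℕ → EuclideanSpace ℝ (Fin n))
    (ha : ∀ i, ∀ w : EuclideanSpace ℝ (Fin n), ⟪a i, w - x i⟫_ℝ ≤ f w - f (x i))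
    (hγf : ∀ i, γ i ≤ f (x i))
    (hγβ : ∀ i, γ i ≤ β i)
    (hγmono : Monotone γ)
    (hβmono : Antitone β)
    (hβf : ∀ i, β (i + 1) ≤ f (x i))
    (hlevel : ∀ i' i'' : ℕ, i' < i'' →
        f (x i') + ⟪a i', x i'' - x i'⟫_ℝ ≤
          (1 - lam i'') * γ i'' + lam i'' * β i'') :
    Filter.Tendsto (fun i => f (x i) - γ i) Filter.atTop (nhds 0) :=
  stmt_16_general (Metric.isCompact_of_isClosed_isBounded hDcl hDbd) hx
    (a := fun i => innerSL ℝ (a i)) ha hlb.2 (fun i => (hlam i).2) hγβ hγmono hβmono hβf hlevel
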